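/- Let D be a division ring with center ℚ(i) and dim_{ℚ(i)} D = n² where n ≥ 2, presented as a cyclic algebra: let E ⊆ D be a subfield with ℚ(i) ⊆ E and [E : ℚ(i)] = n such that E/ℚ(i) is Galois with cyclic Galois group generated by σ, and let u ∈ D be an invertible element satisfying x·u = u·σ(x) for all x ∈ E and uⁿ = γ for some nonzero γ ∈ ℚ(i). Let Λ be a ℤ-order in D that contains the natural order Λ_nat = O_E + u·O_E + u²·O_E + … + u^{n-1}·O_E. Then the subgroup O_E^* of the unit group Λ* has infinite index: [Λ* : O_E^*] = ∞, i.e. Λ* is not a finite union of cosets of O_E^*. -/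

import Mathlib

/-- The field `ℚ(i)` of Gaussian rationals, as a subfield of `ℂ`. -/
noncomputable def Qi : IntermediateField ℚ ℂ := IntermediateField.adjoin ℚ {Complex.I}

/-! Put `b = 1 + u`. Since `b ∈ Λ` and `N b⁻¹ ∈ Λ` for some integer `N ≠ 0`, conjugation by `b`
carries every element of `O_E` congruent to `1` modulo `N` into `Λ`, hence some positive power of
every unit of `O_E` into `Λ*`. If `[Λ* : O_E^*]` were finite, a further power `t` of that unit
would satisfy `b t b⁻¹ = w ∈ O_E^*`. As `u ∉ E`, comparing coefficients of `1` and `u` in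
`b t = w b` gives `t = w` and `t = σ(w)`, so `t` lies in the base field. But by Dirichlet's unit
theorem `O_E^*` has larger rank than the units of the base field, so some unit of `O_E` has no
positive power there. -/

open NumberField

lemma relIndex_ne_zero_of_finset_cover {M : Type*} [Monoid M] {H K : Subgroup Mˣ} (s : Finset M)
    (hs : ∀ g ∈ K, ∃ a ∈ s, ∃ h ∈ H, (g : M) = a * (h : Mˣ)) : H.relIndex K ≠ 0 := by
  choose! a ha h hh hg using hs
  have hinj : Function.Injective
      fun q : K ⧸ H.subgroupOf K ↦ (⟨a q.out, ha _ q.out.2⟩ : s) := by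
    intro p q hpq
    have haeq : a p.out = a q.out := congrArg Subtype.val hpq
    have hquot : (p.out : Mˣ)⁻¹ * q.out = (h p.out)⁻¹ * h q.out := by
      rw [inv_mul_eq_iff_eq_mul]
      ext
      rw [Units.val_mul, hg _ p.out.2, hg _ q.out.2, haeq, Units.val_mul, mul_assoc,
        Units.mul_inv_cancel_left]
    rw [← p.out_eq', ← q.out_eq', QuotientGroup.eq, Subgroup.mem_subgroupOf]
    simpa only [Subgroup.coe_mul, Subgroup.coe_inv, hquot] using
      H.mul_mem (H.inv_mem (hh _ p.out.2)) (hh _ q.out.2)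
  have := Finite.of_injective _ hinj
  exact Subgroup.index_ne_zero_of_finite

lemma not_exists_finset_cover_of_relIndex_eq_zero {R M : Type*} [Monoid R] [Monoid M] {f : R →* M}
    {S : Submonoid M} (hindex : (Units.map f).range.relIndex S.units = 0) :
    ¬ ∃ s : Finset M, ∀ v : M, (v ∈ S ∧ ∃ w ∈ S, v * w = 1 ∧ w * v = 1) →
      ∃ a ∈ s, ∃ e : Rˣ, v = a * f e := by
  rintro ⟨s, hs⟩
  refine relIndex_ne_zero_of_finset_cover s (fun v hv ↦ ?_) hindex
  obtain ⟨a, ha, e, hve⟩ := hs v ⟨hv.1, ↑v⁻¹, hv.2, v.mul_inv, v.inv_mul⟩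
  exact ⟨a, ha, Units.map f e, ⟨e, rfl⟩, hve⟩

lemma finrank_le_finrank_of_forall_exists_pow_mem_range {G H : Type*} [CommGroup G] [CommGroup H]
    [Module.Finite ℤ (Additive G)] [Module.Finite ℤ (Additive H)] (f : G →* H)
    (hf : ∀ y : H, ∃ m : ℕ, 0 < m ∧ y ^ m ∈ f.range) :
    Module.finrank ℤ (Additive H) ≤ Module.finrank ℤ (Additive G) := by
  let L : Additive G →ₗ[ℤ] Additive H := f.toAdditive.toIntLinearMap
  have hcoker : Module.finrank ℤ (Additive H ⧸ LinearMap.range L) = 0 := by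
    refine Module.finrank_eq_zero_iff.2 fun q ↦ ?_
    obtain ⟨y, rfl⟩ := Submodule.Quotient.mk_surjective _ q
    obtain ⟨m, hm, x, hx⟩ := hf y.toMul
    refine ⟨m, by exact_mod_cast hm.ne', ?_⟩
    rw [← Submodule.Quotient.mk_smul, Submodule.Quotient.mk_eq_zero, natCast_zsmul]
    exact ⟨Additive.ofMul x, hx⟩
  have hsplit := (LinearMap.range L).finrank_quotient_add_finrank
  have hrange := L.finrank_range_le
  lia

lemma mem_range_unitsMap_of_val_mem_range {K E : Type*} [Field K] [Field E] [Algebra K E]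
    {e : (𝓞 E)ˣ} (he : (e : E) ∈ Set.range (algebraMap K E)) :
    e ∈ (Units.map (algebraMap (𝓞 K) (𝓞 E)).toMonoidHom).range := by
  obtain ⟨q, hq⟩ := he
  have hint : IsIntegral ℤ q := by
    rw [← isIntegral_algebraMap_iff (algebraMap K E).injective, hq]
    exact RingOfIntegers.isIntegral_coe _
  have hx : algebraMap (𝓞 K) (𝓞 E) ⟨q, hint⟩ = e := RingOfIntegers.ext hq
  have hunit : IsUnit (⟨q, hint⟩ : 𝓞 K) :=
    isUnit_of_map_unit (algebraMap (𝓞 K) (𝓞 E)) _ (hx ▸ e.isUnit)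
  exact ⟨hunit.unit, Units.ext hx⟩

lemma exists_unit_forall_pow_notMem_range {K E : Type*} [Field K] [NumberField K] [Field E]
    [NumberField E] [Algebra K E] (hrank : Units.rank K < Units.rank E) :
    ∃ e : (𝓞 E)ˣ, ∀ m : ℕ, 0 < m →
      ((e ^ m : (𝓞 E)ˣ) : E) ∉ Set.range (algebraMap K E) := by
  by_contra! hpow
  refine hrank.not_ge ?_
  rw [← Units.finrank_eq, ← Units.finrank_eq]
  refine finrank_le_finrank_of_forall_exists_pow_mem_range
    (Units.map (algebraMap (𝓞 K) (𝓞 E)).toMonoidHom) fun e ↦ ?_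
  obtain ⟨m, hm, hmem⟩ := hpow e
  exact ⟨m, hm, mem_range_unitsMap_of_val_mem_range hmem⟩

lemma units_rank_lt_of_isTotallyComplex {K E : Type*} [Field K] [NumberField K]
    [IsTotallyComplex K] [Field E] [NumberField E] [Algebra K E]
    (hdeg : 1 < Module.finrank K E) : Units.rank K < Units.rank E := by
  have := isTotallyComplex_of_algebra K E
  have htower := Module.finrank_mul_finrank ℚ K E
  have hK := InfinitePlace.card_eq_nrRealPlaces_add_nrComplexPlaces K
  have hE := InfinitePlace.card_eq_nrRealPlaces_add_nrComplexPlaces E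
  have hpos : 0 < Module.finrank ℚ K := Module.finrank_pos
  rw [IsTotallyComplex.finrank K, IsTotallyComplex.finrank E] at htower
  rw [IsTotallyComplex.finrank K] at hpos
  rw [IsTotallyComplex.nrRealPlaces_eq_zero] at hK hE
  have hplaces : InfinitePlace.nrComplexPlaces K < InfinitePlace.nrComplexPlaces E := by nlinarith
  unfold Units.rank
  lia

lemma isTotallyComplex_of_sq_eq_neg_one {K : Type*} [Field K] {i : K} (hi : i ^ 2 = -1) :
    IsTotallyComplex K where
  isComplex v := by
    rw [← InfinitePlace.not_isReal_iff_isComplex]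
    rintro ⟨φ, hφ, -⟩
    have him : (φ i).im = 0 := Complex.conj_eq_iff_im.1 (RingHom.congr_fun hφ.star_eq i)
    have hre : (φ i ^ 2).re = -1 := by rw [← map_pow, hi]; simp
    rw [sq, Complex.mul_re, him] at hre
    nlinarith [mul_self_nonneg (φ i).re]

instance Qi.instNumberField : NumberField Qi where
  to_charZero := inferInstance
  to_finiteDimensional := IntermediateField.adjoin.finiteDimensional Complex.isIntegral_rat_I

instance Qi.instIsTotallyComplex : IsTotallyComplex Qi :=
  isTotallyComplex_of_sq_eq_neg_one
    (i := ⟨Complex.I, IntermediateField.mem_adjoin_simple_self ℚ Complex.I⟩)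
    (Subtype.ext Complex.I_sq)

lemma exists_ne_zero_zsmul_mem_of_span_eq_top {V : Type*} [AddCommGroup V] [Module ℚ V]
    {Λ : AddSubgroup V} (hΛ : Submodule.span ℚ (Λ : Set V) = ⊤) (v : V) :
    ∃ N : ℤ, N ≠ 0 ∧ N • v ∈ Λ := by
  have hv : v ∈ Submodule.span ℚ (Λ : Set V) := by rw [hΛ]; exact Submodule.mem_top
  obtain ⟨⟨N, hN₀⟩, hN⟩ := multiple_mem_span_of_mem_localization_span (nonZeroDivisors ℤ) ℚ
    (Λ : Set V) v hv
  have hspan : Submodule.span ℤ (Λ : Set V) ≤ AddSubgroup.toIntSubmodule Λ :=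
    Submodule.span_le.2 subset_rfl
  exact ⟨N, nonZeroDivisors.ne_zero hN₀, hspan hN⟩

lemma exists_pow_dvd_sub_one {R : Type*} [CommRing R] [CharZero R] [Ring.HasFiniteQuotients R]
    {N : ℤ} (hN : N ≠ 0) (e : Rˣ) :
    ∃ m : ℕ, 0 < m ∧ (N : R) ∣ ((e ^ m : Rˣ) : R) - 1 ∧ (N : R) ∣ (((e ^ m)⁻¹ : Rˣ) : R) - 1 := by
  have : Finite (R ⧸ Ideal.span {(N : R)}) := Ring.HasFiniteQuotients.finiteQuotient (by simpa)
  let reduction : Rˣ →* (R ⧸ Ideal.span {(N : R)})ˣ := Units.map (Ideal.Quotient.mk _).toMonoidHom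
  have hdvd {x : Rˣ} (hx : x ∈ reduction.ker) : (N : R) ∣ (x : R) - 1 := by
    rw [← Ideal.mem_span_singleton, ← Ideal.Quotient.eq, map_one]
    exact congrArg Units.val hx
  obtain ⟨m, hm, -, hmem⟩ :=
    Subgroup.exists_pow_mem_of_index_ne_zero (Subgroup.index_ker reduction ▸ Nat.card_pos.ne') e
  exact ⟨m, hm, hdvd hmem, hdvd (inv_mem hmem)⟩

section Conjugation

variable {D : Type*} [Ring D] {Λ : Subring D} {b : Dˣ} {N : ℤ}

lemma conj_mem_of_dvd_sub_one {R : Type*} [Ring R] {f : R →+* D} (hf : ∀ x, f x ∈ Λ)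
    (hb : (b : D) ∈ Λ) (hN : N • (↑b⁻¹ : D) ∈ Λ) {x : R} (hx : (N : R) ∣ x - 1) :
    b * f x * ↑b⁻¹ ∈ Λ := by
  obtain ⟨y, hy⟩ := hx
  have hconj : b * f x * ↑b⁻¹ = 1 + b * f y * (N • (↑b⁻¹ : D)) := by
    rw [eq_add_of_sub_eq' hy, map_add, map_one, map_mul, map_intCast, mul_add, mul_one, add_mul,
      Units.mul_inv, (Int.cast_commute N (f y)).eq, zsmul_eq_mul]
    simp only [mul_assoc]
  rw [hconj]
  exact Λ.add_mem Λ.one_mem (Λ.mul_mem (Λ.mul_mem hb (hf y)) hN)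

lemma exists_conj_pow_mem_units {R : Type*} [CommRing R] [CharZero R]
    [Ring.HasFiniteQuotients R] {f : R →+* D} (hf : ∀ x, f x ∈ Λ)
    (hb : (b : D) ∈ Λ) (hN₀ : N ≠ 0) (hN : N • (↑b⁻¹ : D) ∈ Λ) (e : Rˣ) :
    ∃ m : ℕ, 0 < m ∧ b * Units.map f.toMonoidHom (e ^ m) * b⁻¹ ∈ Λ.toSubmonoid.units := by
  obtain ⟨m, hm, hpow, hpow_inv⟩ := exists_pow_dvd_sub_one hN₀ e
  refine ⟨m, hm, Submonoid.mem_units_of_val_mem_inv_val_mem _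
    (conj_mem_of_dvd_sub_one hf hb hN hpow) ?_⟩
  rw [conj_inv, ← map_inv]
  exact conj_mem_of_dvd_sub_one hf hb hN hpow_inv

end Conjugation

section Twist

variable {E D : Type*} [Field E] [DivisionRing D] {ι : E →+* D} {σ : E → E} {u : D}

lemma apply_eq_self_of_commute (hu : u ≠ 0) (hcomm : ∀ x, ι x * u = u * ι (σ x)) {x : E}
    (hx : Commute u (ι x)) : σ x = x :=
  ι.injective (mul_left_cancel₀ hu ((hcomm x).symm.trans hx.eq.symm))

lemma apply_eq_self_of_one_add_mul_eq (hu : u ≠ 0) (hcomm : ∀ x, ι x * u = u * ι (σ x)) {t w : E}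
    (h : (1 + u) * ι t = ι w * (1 + u)) : σ t = t := by
  have hcoeff : u * ι (σ w - t) = ι (t - w) := by
    rw [map_sub, map_sub, mul_sub, ← hcomm, sub_eq_sub_iff_add_eq_add, add_comm,
      ← mul_one_add (ι w) u, ← h, one_add_mul]
  by_cases hσw : σ w = t
  · have htw : t = w := by
      rwa [hσw, sub_self, map_zero, mul_zero, eq_comm, map_eq_zero, sub_eq_zero] at hcoeff
    exact (congrArg σ htw).trans hσw
  · have hu_mem : u = ι ((t - w) / (σ w - t)) := by
      rw [map_div₀, eq_div_iff ((map_ne_zero ι).2 (sub_ne_zero.2 hσw)), hcoeff]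
    refine apply_eq_self_of_commute hu hcomm ?_
    rw [hu_mem]
    exact (Commute.all _ t).map ι

end Twist

lemma mem_range_algebraMap_of_generator_fixed {K E : Type*} [Field K] [Field E] [Algebra K E]
    [IsGalois K E] {σ : E ≃ₐ[K] E}
    (hσ : ∀ g : E ≃ₐ[K] E, g ∈ Subgroup.zpowers σ) {x : E} (hx : σ x = x) :
    x ∈ Set.range (algebraMap K E) := by
  have hstab : Subgroup.zpowers σ ≤ MulAction.stabilizer (E ≃ₐ[K] E) x :=
    Subgroup.zpowers_le.2 hx
  exact (InfiniteGalois.mem_range_algebraMap_iff_fixed x).2 fun g ↦ hstab (hσ g)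

theorem index_units_ring_of_integers_infinite_general {K E D : Type*} [Field K] [NumberField K]
    [Field E] [NumberField E] [Algebra K E] [IsGalois K E] (hrank : Units.rank K < Units.rank E)
    [DivisionRing D] [CharZero D] (σ : E ≃ₐ[K] E) (hσ : ∀ g : E ≃ₐ[K] E, g ∈ Subgroup.zpowers σ)
    (ι : E →+* D) (u : D) (hu : u ≠ 0) (hcomm : ∀ x : E, ι x * u = u * ι (σ x))
    (Λ : Subring D) (hspan : Submodule.span ℚ (Λ : Set D) = ⊤)
    (hO : ∀ x : 𝓞 E, ι x ∈ Λ) (huΛ : u ∈ Λ) :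
    (Units.map (ι.comp (algebraMap (𝓞 E) E)).toMonoidHom).range.relIndex Λ.toSubmonoid.units
      = 0 := by
  by_contra hindex
  obtain ⟨e, he⟩ := exists_unit_forall_pow_notMem_range hrank
  have hmoved (m : ℕ) (hm : 0 < m) : σ (e ^ m : (𝓞 E)ˣ) ≠ (e ^ m : (𝓞 E)ˣ) :=
    fun h ↦ he m hm (mem_range_algebraMap_of_generator_fixed hσ h)
  have hb₀ : 1 + u ≠ 0 := fun h ↦ hmoved 1 one_pos <| apply_eq_self_of_commute hu hcomm <| by
    rw [eq_neg_of_add_eq_zero_right h]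
    exact Commute.neg_one_left _
  let b : Dˣ := Units.mk0 (1 + u) hb₀
  obtain ⟨N, hN₀, hN⟩ := exists_ne_zero_zsmul_mem_of_span_eq_top
    (Λ := Λ.toAddSubgroup) hspan (↑b⁻¹ : D)
  obtain ⟨m, hm, hconj⟩ := exists_conj_pow_mem_units (f := ι.comp (algebraMap (𝓞 E) E)) hO
    (b := b) (Λ.add_mem Λ.one_mem huΛ) hN₀ hN e
  obtain ⟨k, hk, -, ⟨w, hw⟩, -⟩ := Subgroup.exists_pow_mem_of_relIndex_ne_zero hindex hconj
  rw [conj_pow, ← map_pow, ← pow_mul, eq_mul_inv_iff_mul_eq] at hw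
  exact hmoved (m * k) (Nat.mul_pos hm hk)
    (apply_eq_self_of_one_add_mul_eq hu hcomm (congrArg Units.val hw).symm)

/-- Let `D` be a `ℚ(i)`-central division algebra of index `n ≥ 2`, presented as a cyclic
algebra: `E/ℚ(i)` a cyclic Galois extension of degree `n` embedded in `D` via `ι`, with
Galois group generated by `σ`, and `u ∈ D` invertible with `x·u = u·σ(x)` for all
`x ∈ E` and `uⁿ = γ ∈ ℚ(i)*`.  If `Λ` is a `ℤ`-order in `D` containing the natural
order `O_E ⊕ u·O_E ⊕ ⋯ ⊕ u^{n-1}·O_E`, then the group of units of `Λ` is not a finite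
union of cosets of `O_E^*`, i.e. `[Λ* : O_E^*] = ∞`. -/
theorem index_units_ring_of_integers_infinite (n : ℕ) (hn : 2 ≤ n) (D : Type)
    [DivisionRing D] [CharZero D] [Algebra ↥Qi D]
    [Algebra.IsCentral ↥Qi D] (hdim : Module.finrank ↥Qi D = n ^ 2)
    (E : Type) [Field E] [NumberField E] [Algebra ↥Qi E]
    (hdeg : Module.finrank ↥Qi E = n) [IsGalois ↥Qi E]
    (σ : E ≃ₐ[↥Qi] E) (hσ : ∀ g : E ≃ₐ[↥Qi] E, g ∈ Subgroup.zpowers σ)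
    (ι : E →ₐ[↥Qi] D) (hι : Function.Injective ι)
    (u : D) (hu : IsUnit u)
    (hcomm : ∀ x : E, ι x * u = u * ι (σ x))
    (γ : ↥Qi) (hγ : γ ≠ 0) (hun : u ^ n = algebraMap ↥Qi D γ)
    (Λ : Subring D)
    (hfg : AddSubgroup.FG Λ.toAddSubgroup)
    (hspan : Submodule.span ℚ (Λ : Set D) = ⊤)
    (hnat : ∀ (k : Fin n) (x : NumberField.RingOfIntegers E),
      u ^ (k : ℕ) * ι (algebraMap (NumberField.RingOfIntegers E) E x) ∈ Λ) :
    ¬ ∃ s : Finset D, ∀ v : D,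
        (v ∈ Λ ∧ ∃ w ∈ Λ, v * w = 1 ∧ w * v = 1) →
        ∃ a ∈ s, ∃ e : (NumberField.RingOfIntegers E)ˣ,
          v = a * ι (algebraMap (NumberField.RingOfIntegers E) E
            (e : NumberField.RingOfIntegers E)) := by
  have hrank : Units.rank Qi < Units.rank E := units_rank_lt_of_isTotallyComplex (by lia)
  exact not_exists_finset_cover_of_relIndex_eq_zero <|
    index_units_ring_of_integers_infinite_general hrank σ hσ (ι : E →+* D) u hu.ne_zero hcomm Λ
      hspan (fun x ↦ by simpa using hnat ⟨0, by lia⟩ x) (by simpa using hnat ⟨1, by lia⟩ 1)
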